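/- arXiv:1910.00160 — 6 statements merged into one kernel-verified Lean document; each statement's English description precedes it below -/
import Mathlib

section
/- Let G be a finite group and N a subgroup of G. The following are equivalent: (i) for every subgroup H of G, |H ∩ N| = gcd(|H|, |N|); (ii) every subgroup H of G whose order divides |N| is contained in N; (iii) every cyclic subgroup H of G whose order divides |N| is contained in N; (iv) for every cyclic subgroup H of G, |H ∩ N| = gcd(|H|, |N|). -/
/-!
An element of a subgroup `K` with `|K| ∣ |N|` generates a cyclic group whose order also divides
`|N|`, so cyclic subgroups suffice to test containment in `N`. For the gcd formula, the order of
`H ∩ N` always divides `gcd(|H|, |N|)`; conversely, every prime power dividing the gcd is by Sylow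
the order of a subgroup of `H`, and when containment in `N` can be read off from orders this
subgroup lies in `H ∩ N`.
-/

section

variable {G : Type*} [Group G] {H K L N : Subgroup G} {n : ℕ}

theorem le_of_forall_isCyclic_card_dvd_imp_le
    (hL : ∀ C : Subgroup G, IsCyclic C → Nat.card C ∣ n → C ≤ L) (hK : Nat.card K ∣ n) :
    K ≤ L := by
  intro x hx
  have hxK : Subgroup.zpowers x ≤ K := Subgroup.zpowers_le.mpr hx
  exact Subgroup.zpowers_le.mp <|
    hL (Subgroup.zpowers x) inferInstance ((Subgroup.card_dvd_of_le hxK).trans hK)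

theorem exists_le_card_eq_prime_pow [Finite H] {p k : ℕ} (hp : p.Prime)
    (hpk : p ^ k ∣ Nat.card H) : ∃ K ≤ H, Nat.card K = p ^ k := by
  have : Fact p.Prime := ⟨hp⟩
  obtain ⟨K, hK⟩ := Sylow.exists_subgroup_card_pow_prime p hpk
  exact ⟨K.map H.subtype, Subgroup.map_subtype_le K,
    (Subgroup.card_map_of_injective H.subtype_injective).trans hK⟩

theorem dvd_card_of_forall_card_dvd_imp_le [Finite H] (hn : n ∣ Nat.card H)
    (hL : ∀ K ≤ H, Nat.card K ∣ n → K ≤ L) : n ∣ Nat.card L := by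
  refine (Nat.dvd_iff_prime_pow_dvd_dvd _ _).mpr fun p k hp hpk => ?_
  obtain ⟨K, hKH, hK⟩ := exists_le_card_eq_prime_pow hp (hpk.trans hn)
  rw [← hK] at hpk ⊢
  exact Subgroup.card_dvd_of_le (hL K hKH hpk)

theorem card_inf_dvd_gcd_card (H N : Subgroup G) :
    Nat.card (H ⊓ N : Subgroup G) ∣ Nat.gcd (Nat.card H) (Nat.card N) :=
  Nat.dvd_gcd (Subgroup.card_dvd_of_le inf_le_left) (Subgroup.card_dvd_of_le inf_le_right)

theorem card_inf_eq_gcd_of_forall_card_dvd_imp_le [Finite H]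
    (hN : ∀ K ≤ H, Nat.card K ∣ Nat.card N → K ≤ N) :
    Nat.card (H ⊓ N : Subgroup G) = Nat.gcd (Nat.card H) (Nat.card N) := by
  refine Nat.dvd_antisymm (card_inf_dvd_gcd_card H N) ?_
  refine dvd_card_of_forall_card_dvd_imp_le (Nat.gcd_dvd_left _ _) fun K hKH hK => ?_
  exact le_inf hKH (hN K hKH (hK.trans (Nat.gcd_dvd_right _ _)))

theorem le_of_card_inf_eq_gcd [Finite H]
    (h : Nat.card (H ⊓ N : Subgroup G) = Nat.gcd (Nat.card H) (Nat.card N))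
    (hdvd : Nat.card H ∣ Nat.card N) : H ≤ N := by
  rw [Nat.gcd_eq_left hdvd] at h
  exact inf_eq_left.mp (Subgroup.eq_of_le_of_card_ge inf_le_left h.ge)

end

theorem gcd_property_tfae {G : Type*} [Group G] [Finite G] (N : Subgroup G) :
    List.TFAE
      [∀ H : Subgroup G, Nat.card (H ⊓ N : Subgroup G) = Nat.gcd (Nat.card H) (Nat.card N),
       ∀ H : Subgroup G, Nat.card H ∣ Nat.card N → H ≤ N,
       ∀ H : Subgroup G, IsCyclic H → Nat.card H ∣ Nat.card N → H ≤ N,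
       ∀ H : Subgroup G, IsCyclic H →
         Nat.card (H ⊓ N : Subgroup G) = Nat.gcd (Nat.card H) (Nat.card N)] := by
  tfae_have 1 → 4 := fun h H _ => h H
  tfae_have 4 → 3 := fun h H hH => le_of_card_inf_eq_gcd (h H hH)
  tfae_have 3 → 2 := fun h _ => le_of_forall_isCyclic_card_dvd_imp_le h
  tfae_have 2 → 1 := fun h _ => card_inf_eq_gcd_of_forall_card_dvd_imp_le fun K _ => h K
  tfae_finish
end

section
/- Let G be a finite group and N a normal subgroup of G such that for every subgroup H of G, |H ∩ N| = gcd(|H|, |N|). Then for each prime p dividing |G|, one of the following holds: (i) |N|_p = 1; (ii) |N|_p = |G|_p; (iii) the Sylow p-subgroups of G are cyclic, or they are generalized quaternion groups and |N|_2 = 2. -/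
/-- A group is generalized quaternion if it is isomorphic to a dicyclic group of order `2 ^ n`
for some `n ≥ 3`, i.e. to `QuaternionGroup (2 ^ (n - 2))`. -/
def IsGeneralizedQuaternion (Q : Type*) [Group Q] : Prop :=
  ∃ n : ℕ, 3 ≤ n ∧ Nonempty (Q ≃* QuaternionGroup (2 ^ (n - 2)))

/-!
For a `p`-subgroup `P`, the gcd property makes `M = P ∩ N` comparable under inclusion with every
subgroup of `P`. If `M` is neither trivial nor all of `P`, it contains every subgroup of order `p`
and lies in `⟨c⟩` for every `c ∈ P` outside `M`, so `P` has only one subgroup of order `p`.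

Such a `P` is cyclic or generalized quaternion. Suppose `⟨a⟩` is normal, `b ∉ ⟨a⟩`, `a ∉ ⟨b⟩` and
`b ^ p ∈ ⟨a⟩`. Conjugation by `b` is `a ↦ a ^ r` for some `r`, so
`(a ^ j * b) ^ p = a ^ (j * (1 + r + ⋯ + r ^ (p - 1))) * b ^ p`. No choice of `j` makes this `1`,
as the elements with trivial `p`-th power all lie in `⟨a⟩`; this forces `p = 2`, `r ≡ -1` modulo the
order of `a`, and `b ^ 2` to be the involution of `⟨a⟩`. For a maximal cyclic normal `⟨a⟩`, it
follows that `⟨a⟩` is its own centralizer and that every element outside it inverts `a`, so `⟨a⟩`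
has index two.

A quaternion group is generated by its elements of order `4`, so `M` lies properly in a cyclic group
of order `4`.
-/

open Subgroup
open scoped commutatorElement

section Arithmetic

theorem gcd_geom_sum_dvd_prime {p : ℕ} (hp : p.Prime) (hodd : Odd p) {r : ℤ}
    (hr : (p : ℤ) ∣ r - 1) (m : ℕ) :
    Int.gcd (∑ i ∈ Finset.range p, r ^ i) ((p : ℤ) ^ m) ∣ p := by
  set S := ∑ i ∈ Finset.range p, r ^ i
  have hsub : (p : ℤ) ^ 2 ∣ S - p := by
    obtain ⟨s, hs⟩ := hr
    simpa [← hs] using odd_sq_dvd_geom_sum₂_sub (1 : ℤ) s hodd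
  obtain ⟨t, -, ht⟩ : ∃ t ≤ m, Int.gcd S ((p : ℤ) ^ m) = p ^ t := by
    rw [← Nat.dvd_prime_pow hp]
    exact_mod_cast Int.gcd_dvd_right S ((p : ℤ) ^ m)
  obtain ht1 | ht2 := le_or_gt t 1
  · exact ht ▸ (pow_dvd_pow p ht1).trans (pow_one p).dvd
  · have hS : (p : ℤ) ^ 2 ∣ S := by
      refine (pow_dvd_pow _ ht2).trans ?_
      exact_mod_cast ht ▸ Int.gcd_dvd_left S ((p : ℤ) ^ m)
    have hp2 : p ^ 2 ∣ p ^ 1 := by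
      rw [pow_one]
      exact_mod_cast (dvd_sub_right hS).1 hsub
    exact absurd ((Nat.pow_dvd_pow_iff_le_right hp.one_lt).1 hp2) (by norm_num)

theorem dvd_sub_one_of_dvd_pow_sub_one {p : ℕ} (hp : p.Prime) {r : ℤ} (h : (p : ℤ) ∣ r ^ p - 1) :
    (p : ℤ) ∣ r - 1 := by
  have := Fact.mk hp
  rw [← ZMod.intCast_zmod_eq_zero_iff_dvd] at h ⊢
  simpa using h

theorem modEq_of_not_gcd_add_one_dvd {n : ℕ} {r k : ℤ}
    (hk : (2 : ℤ) ^ (n + 1) ∣ 2 * k * (r - 1))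
    (hgcd : ¬ (Int.gcd (r + 1) (2 ^ (n + 1)) : ℤ) ∣ 2 * k) :
    r ≡ -1 [ZMOD 2 ^ (n + 1)] ∧ 2 * k ≡ 2 ^ n [ZMOD 2 ^ (n + 1)] := by
  obtain ⟨t, htn, ht⟩ : ∃ t ≤ n + 1, Int.gcd (r + 1) (2 ^ (n + 1)) = 2 ^ t := by
    rw [← Nat.dvd_prime_pow Nat.prime_two]
    exact_mod_cast Int.gcd_dvd_right (r + 1) (2 ^ (n + 1))
  have hgcd_dvd : (2 : ℤ) ^ t ∣ r + 1 := by
    exact_mod_cast ht ▸ Int.gcd_dvd_left (r + 1) (2 ^ (n + 1))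
  rw [ht, Nat.cast_pow, Nat.cast_ofNat] at hgcd
  have ht2 : 2 ≤ t := by
    by_contra! h
    exact hgcd (((pow_dvd_pow 2 (Nat.le_of_lt_succ h)).trans (pow_one _).dvd).mul_right k)
  obtain ⟨u, hu⟩ : ∃ u, r - 1 = 2 * (2 * u + 1) := by
    obtain ⟨v, hv⟩ := (pow_dvd_pow (2 : ℤ) ht2).trans hgcd_dvd
    exact ⟨v - 1, by linarith⟩
  have hdvd_of_mul {x : ℤ} (hx : (2 : ℤ) ^ (n + 1) ∣ x * (r - 1)) : (2 : ℤ) ^ n ∣ x := by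
    have hcop : IsCoprime ((2 : ℤ) ^ n) (2 * u + 1) := IsCoprime.pow_left ⟨-u, 1, by ring⟩
    refine hcop.dvd_of_dvd_mul_right (Int.dvd_of_mul_dvd_mul_right two_ne_zero ?_)
    rw [← pow_succ]
    convert hx using 1
    rw [hu]
    ring
  have hk' : (2 : ℤ) ^ n ∣ 2 * k := hdvd_of_mul hk
  obtain rfl : t = n + 1 := by
    by_contra hne
    exact hgcd ((pow_dvd_pow 2 (by omega)).trans hk')
  refine ⟨(Int.modEq_iff_dvd.2 ?_).symm, (Int.modEq_iff_dvd.2 ?_).symm⟩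
  · simpa using hgcd_dvd
  · obtain ⟨c, hc⟩ := hk'
    rw [hc] at hgcd ⊢
    obtain ⟨d, rfl | rfl⟩ := Int.even_or_odd' c
    · exact absurd ⟨d, by ring⟩ hgcd
    · exact ⟨d, by ring⟩

end Arithmetic

section Conjugation

variable {G : Type*} [Group G] {a b : G} {r : ℤ}

theorem semiconjBy_pow_left (h : SemiconjBy b a (a ^ r)) (n : ℕ) :
    SemiconjBy (b ^ n) a (a ^ r ^ n) := by
  induction n with
  | zero => simp
  | succ n ih => simpa only [pow_succ, zpow_mul] using (ih.zpow_right r).mul_left h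

theorem zpow_mul_pow_eq_zpow_geom_sum_mul (h : SemiconjBy b a (a ^ r)) (j : ℤ) (n : ℕ) :
    (a ^ j * b) ^ n = a ^ (j * ∑ i ∈ Finset.range n, r ^ i) * b ^ n := by
  induction n with
  | zero => simp
  | succ n ih =>
    set s := ∑ i ∈ Finset.range n, r ^ i
    calc (a ^ j * b) ^ (n + 1) = a ^ j * (b * a ^ (j * s)) * b ^ n := by
          rw [pow_succ', ih]; simp only [mul_assoc]
      _ = a ^ j * ((a ^ r) ^ (j * s) * b) * b ^ n := by rw [(h.zpow_right (j * s)).eq]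
      _ = a ^ (j + r * (j * s)) * b ^ (n + 1) := by
          rw [zpow_add, zpow_mul a r, pow_succ']; simp only [mul_assoc]
      _ = a ^ (j * ∑ i ∈ Finset.range (n + 1), r ^ i) * b ^ (n + 1) := by
          rw [geom_sum_succ, mul_add, mul_one, mul_left_comm, add_comm]

theorem exists_zpow_mul_pow_eq_one (h : SemiconjBy b a (a ^ r)) {n : ℕ} {i : ℤ}
    (hb : b ^ n = a ^ i)
    (hi : (Int.gcd (∑ i ∈ Finset.range n, r ^ i) (orderOf a) : ℤ) ∣ i) :
    ∃ j : ℤ, (a ^ j * b) ^ n = 1 := by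
  obtain ⟨d, rfl⟩ := hi
  refine ⟨-(Int.gcdA (∑ i ∈ Finset.range n, r ^ i) (orderOf a) * d), ?_⟩
  rw [zpow_mul_pow_eq_zpow_geom_sum_mul h, hb, ← zpow_add, ← orderOf_dvd_iff_zpow_eq_one,
    Int.gcd_eq_gcd_ab]
  exact ⟨Int.gcdB (∑ i ∈ Finset.range n, r ^ i) (orderOf a) * d, by ring⟩

theorem orderOf_dvd_pow_sub_one (h : SemiconjBy b a (a ^ r)) {n : ℕ} (hb : b ^ n ∈ zpowers a) :
    (orderOf a : ℤ) ∣ r ^ n - 1 := by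
  obtain ⟨i, hi⟩ := mem_zpowers_iff.1 hb
  have hcomm : SemiconjBy (b ^ n) a a := hi ▸ (Commute.refl a).zpow_left i
  rw [orderOf_dvd_iff_zpow_eq_one, zpow_sub_one, mul_inv_eq_one]
  exact mul_right_cancel ((semiconjBy_pow_left h n).eq.symm.trans hcomm.eq)

theorem orderOf_dvd_mul_sub_one (h : SemiconjBy b a (a ^ r)) {n : ℕ} {i : ℤ}
    (hb : b ^ n = a ^ i) : (orderOf a : ℤ) ∣ i * (r - 1) := by
  have hcomm : SemiconjBy b (a ^ i) (a ^ i) := hb ▸ (Commute.refl b).pow_right n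
  rw [orderOf_dvd_iff_zpow_eq_one, mul_sub_one, zpow_sub, mul_inv_eq_one, mul_comm, zpow_mul]
  exact mul_right_cancel ((h.zpow_right i).eq.symm.trans hcomm.eq)

/-- The elements `a` and `b` satisfy the relations defining the dicyclic group of order `4 * n`, and
`a` has the same order `2 * n` as in that group. -/
structure IsDicyclicPair (n : ℕ) (a b : G) : Prop where
  orderOf_eq : orderOf a = 2 * n
  semiconjBy_inv : SemiconjBy b a a⁻¹
  sq_eq : b ^ 2 = a ^ n

theorem prime_eq_two_and_isDicyclicPair {p k : ℕ} (hp : p.Prime) (ha : orderOf a = p ^ (k + 1))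
    (hroots : ∀ x : G, x ^ p = 1 → x ∈ zpowers a) (hb : b ∉ zpowers a)
    (hab : SemiconjBy b a (a ^ r)) (hbp : b ^ p ∈ zpowers (a ^ p)) :
    p = 2 ∧ 1 ≤ k ∧ IsDicyclicPair (2 ^ k) a b := by
  obtain ⟨l, hl⟩ := mem_zpowers_iff.1 hbp
  replace hl : b ^ p = a ^ (p * l) := by rw [← hl, zpow_mul, zpow_natCast]
  have hgcd : ¬ (Int.gcd (∑ i ∈ Finset.range p, r ^ i) (orderOf a) : ℤ) ∣ p * l := fun h => by
    obtain ⟨j, hj⟩ := exists_zpow_mul_pow_eq_one hab hl h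
    exact hb ((mul_mem_cancel_left (zpow_mem (mem_zpowers a) j)).1 (hroots _ hj))
  have hlr := orderOf_dvd_mul_sub_one hab hl
  rw [ha, Nat.cast_pow] at hgcd hlr
  obtain rfl | hodd := hp.eq_two_or_odd'
  · obtain ⟨hr, hl'⟩ := modEq_of_not_gcd_add_one_dvd hlr
      (by simpa [Finset.sum_range_succ, add_comm] using hgcd)
    refine ⟨rfl, ?_, ha.trans (pow_succ' 2 k), ?_, ?_⟩
    · by_contra! hk
      obtain rfl : k = 0 := by omega
      simp [Int.ModEq] at hl'
    · have : a ^ r = a⁻¹ := by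
        rw [← zpow_neg_one, zpow_eq_zpow_iff_modEq, ha]
        exact_mod_cast hr
      exact this ▸ hab
    · rw [hl, ← zpow_natCast, zpow_eq_zpow_iff_modEq, ha]
      exact_mod_cast hl'
  · have hr : (p : ℤ) ∣ r ^ p - 1 := by
      refine dvd_trans ?_ (orderOf_dvd_pow_sub_one hab (hl ▸ zpow_mem (mem_zpowers a) _))
      exact_mod_cast ha ▸ dvd_pow_self p k.succ_ne_zero
    refine absurd (dvd_mul_of_dvd_left ?_ l) hgcd
    exact_mod_cast gcd_geom_sum_dvd_prime hp hodd (dvd_sub_one_of_dvd_pow_sub_one hp hr) (k + 1)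

namespace IsDicyclicPair

variable {n : ℕ}

theorem zpow_cast_intCast (h : IsDicyclicPair n a b) (i : ℤ) :
    a ^ ((i : ZMod (2 * n)).cast : ℤ) = a ^ i := by
  rw [zpow_eq_zpow_iff_modEq, h.orderOf_eq, ZMod.coe_intCast]
  exact Int.mod_modEq i _

theorem zpow_mul_eq (h : IsDicyclicPair n a b) (i : ℤ) : a ^ i * b = b * a ^ (-i) := by
  simpa using (h.semiconjBy_inv.zpow_right (-i)).eq.symm

/-- The homomorphism `a ^ i ↦ a ^ i`, `x a ^ i ↦ b a ^ i` from the dicyclic group to a group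
containing a dicyclic pair `a`, `b`. -/
def toMonoidHom (h : IsDicyclicPair n a b) : QuaternionGroup n →* G :=
  MonoidHom.mk'
    (fun
      | .a i => a ^ (i.cast : ℤ)
      | .xa i => b * a ^ (i.cast : ℤ)) <| by
    rintro (i | i) (j | j) <;> obtain ⟨i, rfl⟩ := ZMod.intCast_surjective i <;>
      obtain ⟨j, rfl⟩ := ZMod.intCast_surjective j
    · rw [QuaternionGroup.a_mul_a, ← Int.cast_add]
      simp only [h.zpow_cast_intCast, zpow_add]
    · rw [QuaternionGroup.a_mul_xa, ← Int.cast_sub]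
      simp only [h.zpow_cast_intCast]
      rw [← mul_assoc, h.zpow_mul_eq, mul_assoc, ← zpow_add, neg_add_eq_sub]
    · rw [QuaternionGroup.xa_mul_a, ← Int.cast_add]
      simp only [h.zpow_cast_intCast, zpow_add, mul_assoc]
    · rw [QuaternionGroup.xa_mul_xa, ← Int.cast_natCast, ← Int.cast_add, ← Int.cast_sub]
      simp only [h.zpow_cast_intCast]
      calc a ^ ((n : ℤ) + j - i) = a ^ (n : ℤ) * (a ^ (-i) * a ^ j) := by
            rw [← zpow_add, ← zpow_add]; ring_nf
        _ = b * (b * a ^ (-i)) * a ^ j := by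
            rw [zpow_natCast, ← h.sq_eq, pow_two]; simp only [mul_assoc]
        _ = b * a ^ i * (b * a ^ j) := by rw [← h.zpow_mul_eq]; simp only [mul_assoc]

theorem toMonoidHom_a (h : IsDicyclicPair n a b) (i : ℤ) : h.toMonoidHom (.a i) = a ^ i :=
  h.zpow_cast_intCast i

theorem toMonoidHom_xa (h : IsDicyclicPair n a b) (i : ℤ) : h.toMonoidHom (.xa i) = b * a ^ i :=
  congrArg (b * ·) (h.zpow_cast_intCast i)

theorem toMonoidHom_injective (h : IsDicyclicPair n a b) (hb : b ∉ zpowers a) :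
    Function.Injective h.toMonoidHom := by
  refine (injective_iff_map_eq_one _).2 ?_
  rintro (i | i) hi <;> obtain ⟨i, rfl⟩ := ZMod.intCast_surjective i
  · rw [h.toMonoidHom_a, ← orderOf_dvd_iff_zpow_eq_one, h.orderOf_eq,
      ← ZMod.intCast_zmod_eq_zero_iff_dvd] at hi
    rw [hi, QuaternionGroup.a_zero]
  · rw [h.toMonoidHom_xa, mul_eq_one_iff_eq_inv] at hi
    exact absurd (hi ▸ inv_mem (zpow_mem (mem_zpowers a) i)) hb

theorem toMonoidHom_surjective (h : IsDicyclicPair n a b) (hb : b ∉ zpowers a)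
    (hindex : (zpowers a).index = 2) : Function.Surjective h.toMonoidHom := by
  intro c
  by_cases hc : c ∈ zpowers a
  · obtain ⟨i, rfl⟩ := mem_zpowers_iff.1 hc
    exact ⟨.a i, h.toMonoidHom_a i⟩
  · have hbc : b⁻¹ * c ∈ zpowers a := by
      rw [mul_mem_iff_of_index_two hindex, inv_mem_iff]
      exact iff_of_false hb hc
    obtain ⟨i, hi⟩ := mem_zpowers_iff.1 hbc
    exact ⟨.xa i, by rw [h.toMonoidHom_xa, hi, mul_inv_cancel_left]⟩

/-- The dicyclic group is isomorphic to any group with a dicyclic pair `a`, `b` such that `⟨a⟩` has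
index two and does not contain `b`. -/
noncomputable def mulEquiv (h : IsDicyclicPair n a b) (hb : b ∉ zpowers a)
    (hindex : (zpowers a).index = 2) : QuaternionGroup n ≃* G :=
  MulEquiv.ofBijective h.toMonoidHom
    ⟨h.toMonoidHom_injective hb, h.toMonoidHom_surjective hb hindex⟩

end IsDicyclicPair

end Conjugation

section PGroup

variable {G : Type*} [Group G] {p : ℕ}

theorem inf_center_ne_bot_of_isPGroup [Finite G] [Fact p.Prime] (hG : IsPGroup p G)
    {K : Subgroup G} [K.Normal] (hK : K ≠ ⊥) : K ⊓ center G ≠ ⊥ := by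
  have hdvd : p ∣ Nat.card K :=
    (hG.to_subgroup K).card_eq_or_dvd.resolve_left (mt K.eq_bot_of_card_eq hK)
  obtain ⟨z, hz, hz1⟩ := (hG.of_equiv
    ConjAct.toConjAct).exists_fixed_point_of_prime_dvd_card_of_fixed_point K hdvd
    (a := 1) (fun g => smul_one g)
  have hcenter : (z : G) ∈ center G := by
    rw [← SetLike.mem_coe, ← ConjAct.fixedPoints_eq_center]
    exact fun g => congrArg Subtype.val (hz g)
  exact fun h => hz1 (Subtype.ext ((mem_bot.1 (h ▸ ⟨z.2, hcenter⟩)).symm))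

theorem exists_orderOf_eq_prime_of_ne_bot [Finite G] [Fact p.Prime] (hG : IsPGroup p G)
    {K : Subgroup G} (hK : K ≠ ⊥) : ∃ z ∈ K, orderOf z = p := by
  obtain ⟨z, hz⟩ := exists_prime_orderOf_dvd_card' (G := K) p
    ((hG.to_subgroup K).card_eq_or_dvd.resolve_left (mt K.eq_bot_of_card_eq hK))
  exact ⟨z, z.2, by rwa [orderOf_coe]⟩

theorem exists_mem_notMem_pow_mem_commutatorElement_mem [Finite G] [Fact p.Prime]
    (hG : IsPGroup p G) {A C : Subgroup G} [A.Normal] [C.Normal] (hCA : ¬ C ≤ A) :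
    ∃ b ∈ C, b ∉ A ∧ b ^ p ∈ A ∧ ∀ g : G, ⁅g, b⁆ ∈ A := by
  have hmap : (C.map (QuotientGroup.mk' A)).Normal :=
    Normal.map ‹_› _ (QuotientGroup.mk'_surjective A)
  have hbot : C.map (QuotientGroup.mk' A) ≠ ⊥ := by
    rwa [ne_eq, Subgroup.map_eq_bot_iff, QuotientGroup.ker_mk']
  obtain ⟨z, ⟨⟨b, hbC, rfl⟩, hz⟩, hzp⟩ := exists_orderOf_eq_prime_of_ne_bot (hG.to_quotient A)
    (inf_center_ne_bot_of_isPGroup (hG.to_quotient A) hbot)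
  refine ⟨b, hbC, fun hbA => ?_, ?_, fun g => ?_⟩
  · rw [QuotientGroup.mk'_apply, (QuotientGroup.eq_one_iff b).2 hbA, orderOf_one] at hzp
    exact (Fact.out : p.Prime).ne_one hzp.symm
  · rw [← QuotientGroup.eq_one_iff, QuotientGroup.mk_pow, ← QuotientGroup.mk'_apply, ← hzp,
      pow_orderOf_eq_one]
  · rw [← QuotientGroup.eq_one_iff, ← QuotientGroup.mk'_apply, map_commutatorElement,
      commutatorElement_eq_one_iff_mul_comm]
    exact mem_center_iff.1 hz _

theorem mem_zpowers_pow_of_notMem_zpowers [hp : Fact p.Prime] (hG : IsPGroup p G) {a c : G}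
    (hc : c ∈ zpowers a) (ha : a ∉ zpowers c) : c ∈ zpowers (a ^ p) := by
  obtain ⟨j, rfl⟩ := mem_zpowers_iff.1 hc
  obtain ⟨m, hm⟩ := IsPGroup.iff_orderOf.1 hG a
  obtain ⟨k, rfl⟩ : (p : ℤ) ∣ j := by
    by_contra hpj
    refine ha (mem_zpowers_zpow_iff.2 ?_)
    rw [hm, Int.gcd_comm, ← Int.isCoprime_iff_gcd_eq_one, Nat.cast_pow]
    exact ((Nat.prime_iff_prime_int.1 hp.out).coprime_iff_not_dvd.2 hpj).pow_left
  rw [zpow_mul, zpow_natCast]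
  exact zpow_mem (mem_zpowers _) k

theorem pow_mem_of_forall_pow_sq_mem (hG : IsPGroup p G) {H : Subgroup G}
    (hH : ∀ x, x ^ p ^ 2 ∈ H → x ^ p ∈ H) (x : G) : x ^ p ∈ H := by
  obtain ⟨k, hk⟩ := isPGroup_iff_pow_pow_eq_one.1 hG x
  have hmem : x ^ p ^ k ∈ H := hk ▸ one_mem H
  clear hk
  induction k generalizing x with
  | zero => exact pow_mem (by simpa using hmem) p
  | succ k ih => exact hH x (by simpa only [← pow_mul, ← pow_two] using ih (x ^ p) (by
      rwa [← pow_mul, ← pow_succ']))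

theorem exists_semiconjBy_zpow_of_normal_zpowers {a : G} [h : (zpowers a).Normal] (b : G) :
    ∃ r : ℤ, SemiconjBy b a (a ^ r) := by
  obtain ⟨r, hr⟩ := mem_zpowers_iff.1 (h.conj_mem a (mem_zpowers a) b)
  exact ⟨r, hr ▸ SemiconjBy.conj_mk b a⟩

-- `b` acts on `⟨a⟩` as an exponent `r`, so `b ^ 2` acts as `r ^ 2`, which is never `-1` modulo `4`.
theorem not_semiconjBy_sq_inv {a : G} [(zpowers a).Normal] (ha : 4 ∣ orderOf a) (b : G) :
    ¬ SemiconjBy (b ^ 2) a a⁻¹ := by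
  intro h
  obtain ⟨r, hr⟩ := exists_semiconjBy_zpow_of_normal_zpowers (a := a) b
  have hpow : a ^ r ^ 2 = a ^ (-1 : ℤ) := by
    rw [zpow_neg_one]
    exact mul_right_cancel ((semiconjBy_pow_left hr 2).eq.symm.trans h.eq)
  have h4 : r ^ 2 ≡ -1 [ZMOD 4] :=
    (zpow_eq_zpow_iff_modEq.1 hpow).of_dvd (by exact_mod_cast ha)
  obtain ⟨t, rfl | rfl⟩ := Int.even_or_odd' r <;> ring_nf at h4 <;>
    simp only [Int.ModEq] at h4 <;> omega

theorem index_zpowers_eq_two_of_forall_semiconjBy_inv {a b : G}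
    (hcent : centralizer {a} ≤ zpowers a) (hb : b ∉ zpowers a)
    (hinv : ∀ c ∉ zpowers a, SemiconjBy c a a⁻¹) :
    (zpowers a).index = 2 := by
  refine index_eq_two_iff_exists_notMem_and'.2 ⟨b, hb, fun c => or_iff_not_imp_right.2 fun hc => ?_⟩
  refine hcent (mem_centralizer_singleton_iff.2 (SemiconjBy.eq ?_))
  simpa using (hinv b hb).inv_right.mul_left (hinv c hc)

theorem normal_zpowers_of_commutatorElement_mem {b : G} (h : ∀ g : G, ⁅g, b⁆ ∈ zpowers b) :
    (zpowers b).Normal := by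
  refine ⟨fun x hx g => ?_⟩
  obtain ⟨i, rfl⟩ := mem_zpowers_iff.1 hx
  rw [← conj_zpow]
  exact zpow_mem ((mul_mem_cancel_right (inv_mem (mem_zpowers b))).1 (h g)) i

section UniqueSubgroup

variable [Finite G] [hp : Fact p.Prime] (hG : IsPGroup p G)
  (huniq : {H : Subgroup G | Nat.card H = p}.Subsingleton)

include hG huniq

theorem mem_of_pow_prime_eq_one {K : Subgroup G} (hK : K ≠ ⊥) {x : G} (hx : x ^ p = 1) :
    x ∈ K := by
  obtain rfl | hx1 := eq_or_ne x 1
  · exact one_mem K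
  obtain ⟨z, hzK, hz⟩ := exists_orderOf_eq_prime_of_ne_bot hG hK
  have hxz : zpowers x = zpowers z :=
    huniq ((Nat.card_zpowers x).trans (orderOf_eq_prime hx hx1)) ((Nat.card_zpowers z).trans hz)
  exact zpowers_le.2 hzK (hxz ▸ mem_zpowers x)

theorem exists_isDicyclicPair_of_pow_mem_zpowers {a b : G} [(zpowers a).Normal]
    (hb : b ∉ zpowers a) (hbp : b ^ p ∈ zpowers a) (hab : a ∉ zpowers b) :
    p = 2 ∧ ∃ k, 1 ≤ k ∧ IsDicyclicPair (2 ^ k) a b := by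
  have ha : a ≠ 1 := fun h => hab (h ▸ one_mem _)
  obtain ⟨k, hk⟩ : ∃ k, orderOf a = p ^ (k + 1) := by
    obtain ⟨m, hm⟩ := IsPGroup.iff_orderOf.1 hG a
    obtain _ | k := m
    · exact absurd (orderOf_eq_one_iff.1 hm) ha
    · exact ⟨k, hm⟩
  obtain ⟨r, hr⟩ := exists_semiconjBy_zpow_of_normal_zpowers (a := a) b
  have hbpp : b ^ p ∈ zpowers (a ^ p) := mem_zpowers_pow_of_notMem_zpowers hG hbp
    fun h => hab (zpowers_le.2 (pow_mem (mem_zpowers b) p) h)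
  obtain ⟨hp2, hk1, hpair⟩ := prime_eq_two_and_isDicyclicPair hp.out hk
    (fun x hx => mem_of_pow_prime_eq_one hG huniq (zpowers_ne_bot.2 ha) hx) hb hr hbpp
  exact ⟨hp2, k, hk1, hpair⟩

theorem exists_normal_zpowers_centralizer_le :
    ∃ a : G, (zpowers a).Normal ∧ centralizer {a} ≤ zpowers a := by
  obtain ⟨a, hnormal, hmax⟩ := (Set.toFinite {a : G | (zpowers a).Normal}).exists_maximalFor
    zpowers _ ⟨1, by rw [Set.mem_ofPred_eq, zpowers_one_eq_bot]; infer_instance⟩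
  have : (zpowers a).Normal := hnormal
  refine ⟨a, this, ?_⟩
  by_contra hle
  have : (centralizer {a}).Normal := by
    rw [← centralizer_closure, ← zpowers_eq_closure]
    infer_instance
  obtain ⟨b, hcomm, hb, hbp, hbcomm⟩ := exists_mem_notMem_pow_mem_commutatorElement_mem hG hle
  have hab : a ∉ zpowers b := fun h => by
    have hab_le : zpowers a ≤ zpowers b := zpowers_le.2 h
    have hbnormal := normal_zpowers_of_commutatorElement_mem fun g => hab_le (hbcomm g)
    exact hb (hmax hbnormal hab_le (mem_zpowers b))
  obtain ⟨-, k, hk, hpair⟩ := exists_isDicyclicPair_of_pow_mem_zpowers hG huniq hb hbp hab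
  have hinv : a = a⁻¹ := mul_right_cancel
    ((mem_centralizer_singleton_iff.1 hcomm).symm.trans hpair.semiconjBy_inv.eq)
  have hdvd : 2 * 2 ^ k ∣ 2 := by
    rw [← hpair.orderOf_eq, orderOf_dvd_iff_pow_eq_one, pow_two, ← eq_inv_iff_mul_eq_one]
    exact hinv
  have := Nat.le_of_dvd two_pos hdvd
  have := Nat.pow_le_pow_right two_pos hk
  omega

theorem isCyclic_or_isGeneralizedQuaternion_of_unique_subgroup :
    IsCyclic G ∨ p = 2 ∧ IsGeneralizedQuaternion G := by
  obtain ⟨a, hnormal, hcent⟩ := exists_normal_zpowers_centralizer_le hG huniq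
  refine or_iff_not_imp_left.2 fun hcyc => ?_
  obtain ⟨b, hb⟩ : ∃ b, b ∉ zpowers a := by
    by_contra! h
    exact hcyc ⟨a, h⟩
  have hpair {c : G} (hc : c ∉ zpowers a) (hcp : c ^ p ∈ zpowers a) :
      p = 2 ∧ ∃ k, 1 ≤ k ∧ IsDicyclicPair (2 ^ k) a c := by
    refine exists_isDicyclicPair_of_pow_mem_zpowers hG huniq hc hcp fun h => hc (hcent ?_)
    obtain ⟨i, rfl⟩ := mem_zpowers_iff.1 h
    exact mem_centralizer_singleton_iff.2 ((Commute.refl c).zpow_right i)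
  have hpow : ∀ c : G, c ^ p ∈ zpowers a := by
    refine pow_mem_of_forall_pow_sq_mem hG fun c hc => ?_
    by_contra hcp
    obtain ⟨rfl, k, hk, h⟩ := hpair hcp (by rwa [← pow_mul, ← pow_two])
    refine not_semiconjBy_sq_inv ?_ c h.semiconjBy_inv
    rw [h.orderOf_eq]
    exact mul_dvd_mul_left 2 (dvd_pow_self 2 (by omega))
  have hindex : (zpowers a).index = 2 := index_zpowers_eq_two_of_forall_semiconjBy_inv hcent hb
    fun c hc => let ⟨_, _, _, h⟩ := hpair hc (hpow c); h.semiconjBy_inv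
  obtain ⟨hp2, k, hk, h⟩ := hpair hb (hpow b)
  exact ⟨hp2, k + 2, by omega, ⟨(h.mulEquiv hb hindex).symm⟩⟩

end UniqueSubgroup

end PGroup

section Comparable

variable {G : Type*} [Group G] {p : ℕ} {M : Subgroup G}

theorem eq_of_card_eq_of_isCyclic [Finite G] [IsCyclic G] {H K : Subgroup G}
    (h : Nat.card H = Nat.card K) : H = K := by
  let := IsCyclic.commGroup (α := G)
  have hker {L : Subgroup G} (hL : Nat.card L = Nat.card H) :
      L = (powMonoidHom (Nat.card H)).ker := by
    refine eq_of_le_of_card_ge (fun x hx => ?_) ?_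
    · rw [MonoidHom.mem_ker, powMonoidHom_apply, ← hL, ← orderOf_dvd_iff_pow_eq_one]
      exact orderOf_dvd_natCard L hx
    · rw [IsCyclic.card_powMonoidHom_ker, hL]
      exact Nat.gcd_le_right _ Nat.card_pos
  exact (hker rfl).trans (hker h.symm).symm

theorem subsingleton_setOf_card_eq_of_le_zpowers [Finite G] {n : ℕ} {c : G}
    (h : ∀ H : Subgroup G, Nat.card H = n → H ≤ zpowers c) :
    {H : Subgroup G | Nat.card H = n}.Subsingleton := fun H hH K hK => by
  have := isCyclic_zpowers c
  rw [← inf_of_le_left (h H hH), ← inf_of_le_left (h K hK), ← subgroupOf_inj]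
  refine eq_of_card_eq_of_isCyclic ?_
  rw [Nat.card_congr (subgroupOfEquivOfLe (h H hH)).toEquiv,
    Nat.card_congr (subgroupOfEquivOfLe (h K hK)).toEquiv]
  exact hH.trans hK.symm

theorem IsGeneralizedQuaternion.exists_notMem_orderOf_eq_four (h : IsGeneralizedQuaternion G)
    (hM : M ≠ ⊤) : ∃ c ∉ M, orderOf c = 4 := by
  obtain ⟨n, -, ⟨e⟩⟩ := h
  by_contra! hall
  have hxa (i) : e.symm (.xa i) ∈ M := by
    by_contra hi
    exact hall _ hi ((MulEquiv.orderOf_eq _ _).trans (QuaternionGroup.orderOf_xa i))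
  refine hM (eq_top_iff.2 fun x _ => ?_)
  obtain ⟨y, rfl⟩ := e.symm.surjective x
  obtain i | i := y
  · rw [show QuaternionGroup.a i = .xa 0 * .xa (i - (2 ^ (n - 2) : ℕ)) by simp, map_mul]
    exact mul_mem (hxa _) (hxa _)
  · exact hxa i

theorem le_zpowers_of_notMem (hM : ∀ H : Subgroup G, H ≤ M ∨ M ≤ H) {c : G} (hc : c ∉ M) :
    M ≤ zpowers c :=
  (hM (zpowers c)).resolve_left (mt zpowers_le.1 hc)

theorem isCyclic_or_isGeneralizedQuaternion_of_forall_le_or_le [Finite G] [hp : Fact p.Prime]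
    (hG : IsPGroup p G) (hM : ∀ H : Subgroup G, H ≤ M ∨ M ≤ H) (hbot : M ≠ ⊥) (htop : M ≠ ⊤) :
    IsCyclic G ∨ p = 2 ∧ IsGeneralizedQuaternion G ∧ Nat.card M = 2 := by
  obtain ⟨c, hc⟩ : ∃ c, c ∉ M := by
    by_contra! h
    exact htop (eq_top_iff' M |>.2 h)
  have hprime_le (H : Subgroup G) (hH : Nat.card H = p) : H ≤ M := by
    refine (hM H).elim id fun hMH => ?_
    have hcard : Nat.card M = p :=
      ((Nat.dvd_prime hp.out).1 (hH ▸ card_dvd_of_le hMH)).resolve_left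
        (mt M.eq_bot_of_card_eq hbot)
    exact (eq_of_le_of_card_ge hMH (hH.trans hcard.symm).le).ge
  refine (isCyclic_or_isGeneralizedQuaternion_of_unique_subgroup hG
    (subsingleton_setOf_card_eq_of_le_zpowers fun H hH =>
      (hprime_le H hH).trans (le_zpowers_of_notMem hM hc))).imp_right ?_
  rintro ⟨rfl, hQ⟩
  refine ⟨rfl, hQ, ?_⟩
  obtain ⟨d, hd, hd4⟩ := hQ.exists_notMem_orderOf_eq_four htop
  have hlt : M < zpowers d :=
    (le_zpowers_of_notMem hM hd).lt_of_ne fun h => hd (h ▸ mem_zpowers d)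
  have hcard : Nat.card (zpowers d) = 2 ^ 2 := (Nat.card_zpowers d).trans hd4
  obtain ⟨k, hk, hMk⟩ := (Nat.dvd_prime_pow Nat.prime_two).1 (hcard ▸ card_dvd_of_le hlt.le)
  have hk0 : k ≠ 0 := fun h => hbot (M.eq_bot_of_card_eq (by rw [hMk, h, pow_zero]))
  have hk2 : k ≠ 2 := fun h =>
    hlt.ne (eq_of_le_of_card_ge hlt.le (hcard.trans_le (hMk.trans (h ▸ rfl)).ge))
  obtain rfl : k = 1 := by omega
  rw [hMk, pow_one]

end Comparable

section GcdProperty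

variable {G : Type*} [Group G] [Finite G] {N : Subgroup G} {p : ℕ}

theorem le_or_inf_le_of_card_inf_eq_gcd [hp : Fact p.Prime] {P H : Subgroup G} (hP : IsPGroup p P)
    (hHP : H ≤ P) (hH : Nat.card (H ⊓ N : Subgroup G) = Nat.gcd (Nat.card H) (Nat.card N)) :
    H ≤ N ∨ P ⊓ N ≤ H := by
  obtain ⟨k, hk⟩ := IsPGroup.iff_card.1 (hP.to_le hHP)
  obtain ⟨l, hl⟩ := IsPGroup.iff_card.1 (hP.to_le (inf_le_left : P ⊓ N ≤ P))
  have hlN : p ^ l ∣ Nat.card N := hl ▸ card_dvd_of_le inf_le_right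
  obtain hkl | hlk := le_total k l
  · left
    have hdvd : Nat.card H ∣ Nat.card N := hk ▸ (pow_dvd_pow p hkl).trans hlN
    exact inf_eq_left.1 (eq_of_le_of_card_ge inf_le_left (by rw [hH, Nat.gcd_eq_left hdvd]))
  · right
    have hle : Nat.card (P ⊓ N : Subgroup G) ≤ Nat.card (H ⊓ N : Subgroup G) := by
      rw [hH, hl]
      exact Nat.le_of_dvd (Nat.gcd_pos_of_pos_left _ Nat.card_pos)
        (Nat.dvd_gcd (hk ▸ pow_dvd_pow p hlk) hlN)
    exact (eq_of_le_of_card_ge (inf_le_inf_right N hHP) hle).ge.trans inf_le_left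

theorem card_subgroupOf_eq_pow_factorization [hp : Fact p.Prime] (P : Sylow p G)
    (h : Nat.card (P ⊓ N : Subgroup G) = Nat.gcd (Nat.card P) (Nat.card N)) :
    Nat.card (N.subgroupOf P) = p ^ (Nat.card N).factorization p := by
  have hle : (Nat.card N).factorization p ≤ (Nat.card G).factorization p :=
    (Nat.factorization_le_iff_dvd Nat.card_pos.ne' Nat.card_pos.ne').2
      (card_subgroup_dvd_card N) p
  rw [← inf_subgroupOf_left, Nat.card_congr (subgroupOfEquivOfLe inf_le_left).toEquiv, h,
    P.card_eq_multiplicity]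
  refine Nat.dvd_antisymm ?_ (Nat.dvd_gcd (pow_dvd_pow p hle) (Nat.ordProj_dvd _ _))
  obtain ⟨k, -, hk⟩ := (Nat.dvd_prime_pow hp.out).1 (Nat.gcd_dvd_left _ (Nat.card N))
  rw [hk, Nat.pow_dvd_pow_iff_le_right hp.out.one_lt,
    ← hp.out.pow_dvd_iff_le_factorization Nat.card_pos.ne', ← hk]
  exact Nat.gcd_dvd_right _ _

theorem subgroupOf_le_or_le_of_card_inf_eq_gcd [Fact p.Prime] {P : Subgroup G} (hP : IsPGroup p P)
    (h : ∀ H ≤ P, Nat.card (H ⊓ N : Subgroup G) = Nat.gcd (Nat.card H) (Nat.card N))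
    (H : Subgroup P) : H ≤ N.subgroupOf P ∨ N.subgroupOf P ≤ H := by
  have hHP : H.map P.subtype ≤ P := map_subtype_le H
  rw [← inf_subgroupOf_left]
  refine (le_or_inf_le_of_card_inf_eq_gcd hP hHP (h _ hHP)).imp (fun hN => ?_) fun hN => ?_
  · exact map_le_iff_le_comap.1 (le_inf hHP hN)
  · exact (comap_mono hN).trans (comap_map_eq_self_of_injective P.subtype_injective H).le

theorem isCyclic_or_isGeneralizedQuaternion_of_card_inf_eq_gcd [hp : Fact p.Prime] (P : Sylow p G)
    (h : ∀ H ≤ (P : Subgroup G),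
      Nat.card (H ⊓ N : Subgroup G) = Nat.gcd (Nat.card H) (Nat.card N))
    (hN0 : (Nat.card N).factorization p ≠ 0)
    (hNG : (Nat.card N).factorization p ≠ (Nat.card G).factorization p) :
    IsCyclic P ∨ IsGeneralizedQuaternion P ∧ (Nat.card N).factorization 2 = 1 := by
  have hcard := card_subgroupOf_eq_pow_factorization P (h P le_rfl)
  have hinj := Nat.pow_right_injective hp.out.two_le
  refine (isCyclic_or_isGeneralizedQuaternion_of_forall_le_or_le P.isPGroup'
    (subgroupOf_le_or_le_of_card_inf_eq_gcd P.isPGroup' h) (fun hbot => hN0 (hinj ?_))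
    fun htop => hNG (hinj ?_)).imp_right ?_
  · simp only [← hcard, hbot, card_bot, pow_zero]
  · simp only [← hcard, htop, card_top, P.card_eq_multiplicity]
  · rintro ⟨rfl, hQ, h2⟩
    exact ⟨hQ, hinj (by simp only [← hcard, h2, pow_one])⟩

end GcdProperty

theorem sylow_condition_of_gcd_property_general {G : Type*} [Group G] [Finite G] (N : Subgroup G)
    {p : ℕ} (hp : p.Prime)
    (h : ∀ H : Subgroup G, IsPGroup p H →
      Nat.card (H ⊓ N : Subgroup G) = Nat.gcd (Nat.card H) (Nat.card N)) :
    (Nat.card N).factorization p = 0 ∨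
    (Nat.card N).factorization p = (Nat.card G).factorization p ∨
    ((∀ P : Sylow p G, IsCyclic P) ∨
      ((∀ P : Sylow p G, IsGeneralizedQuaternion P) ∧ (Nat.card N).factorization 2 = 1)) := by
  have := Fact.mk hp
  refine or_iff_not_imp_left.2 fun hN0 => or_iff_not_imp_left.2 fun hNG => ?_
  let P : Sylow p G := default
  obtain hcyc | ⟨⟨n, hn, ⟨e⟩⟩, hN2⟩ := isCyclic_or_isGeneralizedQuaternion_of_card_inf_eq_gcd P
    (fun H hH => h H (P.isPGroup'.to_le hH)) hN0 hNG
  · exact .inl fun Q => (Sylow.equiv P Q).isCyclic.1 hcyc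
  · exact .inr ⟨fun Q => ⟨n, hn, ⟨(Sylow.equiv Q P).trans e⟩⟩, hN2⟩

theorem sylow_condition_of_gcd_property {G : Type*} [Group G] [Finite G] (N : Subgroup G)
    [N.Normal]
    (h : ∀ H : Subgroup G, Nat.card (H ⊓ N : Subgroup G) = Nat.gcd (Nat.card H) (Nat.card N)) :
    ∀ p : ℕ, p.Prime → p ∣ Nat.card G →
      (Nat.card N).factorization p = 0 ∨
      (Nat.card N).factorization p = (Nat.card G).factorization p ∨
      ((∀ P : Sylow p G, IsCyclic P) ∨
        ((∀ P : Sylow p G, IsGeneralizedQuaternion P) ∧ (Nat.card N).factorization 2 = 1)) :=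
  fun _ hp _ => sylow_condition_of_gcd_property_general N hp fun H _ => h H
end

section
/- Let G be a finite group, N a normal subgroup of G, and C a cyclic group of order |G| (e.g., C = ZMod |G|). Let C_N denote the unique subgroup of C of order |N|, and for each subgroup K of G let C_K denote the unique subgroup of C of order |K|. Then G and N satisfy the gcd property (for every subgroup H of G, |H ∩ N| = gcd(|H|, |N|)) if and only if for every subgroup K of G, the number of C_K-fixed points of the coset action of C on C/C_N equals the number of K-fixed points of the coset action of G on G/N. -/
/-!
The gcd property of `N` says that `N` contains every subgroup whose order divides `|N|`; in
particular it makes `N` normal, as the conjugates of `N` have order `|N|`. A normal `N` is the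
stabilizer of each of its cosets, so a subgroup `K` fixes all `[G : N]` cosets if `K ≤ N`, that
is, if `|K|` divides `|N|`, and none otherwise. Conversely, if every `K` has this number of fixed
cosets and `|K|` divides `|N|`, then `K` fixes the coset `N`, so `K ≤ N`. The number depends only
on orders, and every subgroup of a cyclic group has the gcd property, so it is also the number of
fixed points in the cyclic group.
-/

open MulAction

section FixedCosets

variable {G : Type*} [Group G] {N K : Subgroup G}

theorem mem_fixedPoints_quotient_iff_le [N.Normal] {x : G ⧸ N} :
    x ∈ fixedPoints K (G ⧸ N) ↔ K ≤ N := by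
  have smul_eq_iff (k : G) : k • x = x ↔ k ∈ N := by
    induction x using QuotientGroup.induction_on with
    | H g =>
      rw [Quotient.smul_coe, smul_eq_mul, QuotientGroup.mk_mul, mul_eq_right,
        QuotientGroup.eq_one_iff]
  exact ⟨fun hx k hk => (smul_eq_iff k).1 (hx ⟨k, hk⟩), fun h k => (smul_eq_iff k).2 (h k.2)⟩

theorem card_fixedPoints_quotient_of_le [N.Normal] (h : K ≤ N) :
    Nat.card (fixedPoints K (G ⧸ N)) = N.index := by
  have all_fixed : fixedPoints K (G ⧸ N) = Set.univ :=
    Set.eq_univ_of_forall fun _ => mem_fixedPoints_quotient_iff_le.2 h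
  rw [all_fixed, Nat.card_univ, Subgroup.index]

theorem card_fixedPoints_quotient_of_not_le [N.Normal] (h : ¬K ≤ N) :
    Nat.card (fixedPoints K (G ⧸ N)) = 0 := by
  have none_fixed : fixedPoints K (G ⧸ N) = ∅ :=
    Set.eq_empty_of_forall_notMem fun _ => mt mem_fixedPoints_quotient_iff_le.1 h
  rw [none_fixed, Nat.card_coe_set_eq, Set.ncard_empty]

theorem le_of_card_fixedPoints_quotient_eq_index [N.FiniteIndex]
    (h : Nat.card (fixedPoints K (G ⧸ N)) = N.index) : K ≤ N := by
  have all_fixed : fixedPoints K (G ⧸ N) = Set.univ :=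
    (Set.eq_univ_iff_ncard _).2 h
  intro k hk
  have one_fixed : ((1 : G) : G ⧸ N) ∈ fixedPoints K (G ⧸ N) := all_fixed ▸ Set.mem_univ _
  rw [← stabilizer_quotient N]
  exact one_fixed ⟨k, hk⟩

end FixedCosets

/-- The gcd property of a subgroup `N` of `G`, meaningful when `G` is finite (`Nat.card` of an
infinite subgroup is `0`). -/
def HasGcdProperty {G : Type*} [Group G] (N : Subgroup G) : Prop :=
  ∀ H : Subgroup G, Nat.card (H ⊓ N : Subgroup G) = Nat.gcd (Nat.card H) (Nat.card N)

section GcdProperty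

variable {G : Type*} [Group G] [Finite G] {N : Subgroup G}

theorem HasGcdProperty.le_iff_card_dvd_card (hN : HasGcdProperty N) {K : Subgroup G} :
    K ≤ N ↔ Nat.card K ∣ Nat.card N := by
  refine ⟨Subgroup.card_dvd_of_le, fun hdvd => ?_⟩
  have card_inf : Nat.card (K ⊓ N : Subgroup G) = Nat.card K := by
    rw [hN K, Nat.gcd_eq_left hdvd]
  exact inf_eq_left.1 (Subgroup.eq_of_le_of_card_ge inf_le_left card_inf.ge)

theorem HasGcdProperty.of_forall_le_of_card_dvd_card
    (h : ∀ K : Subgroup G, Nat.card K ∣ Nat.card N → K ≤ N) : HasGcdProperty N := by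
  intro H
  refine Nat.dvd_antisymm (Nat.dvd_gcd (Subgroup.card_dvd_of_le inf_le_left)
    (Subgroup.card_dvd_of_le inf_le_right)) ?_
  -- `H` may have no subgroup of order `gcd(|H|, |N|)`, but Sylow gives one for each prime power
  -- dividing it.
  refine (Nat.dvd_iff_prime_pow_dvd_dvd _ _).2 fun p k hp hpk => ?_
  have := Fact.mk hp
  obtain ⟨P, hP⟩ := Sylow.exists_subgroup_card_pow_prime p (hpk.trans (Nat.gcd_dvd_left _ _))
  have card_map : Nat.card (P.map H.subtype) = p ^ k := by
    rw [Subgroup.card_map_of_injective H.subtype_injective, hP]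
  have map_le : P.map H.subtype ≤ N := h _ (card_map ▸ hpk.trans (Nat.gcd_dvd_right _ _))
  exact card_map ▸ Subgroup.card_dvd_of_le (le_inf (Subgroup.map_subtype_le P) map_le)

theorem HasGcdProperty.normal (hN : HasGcdProperty N) : N.Normal := by
  refine Subgroup.normal_iff_map_conj_eq.2 fun g => ?_
  have card_conj : Nat.card (N.map (MulAut.conj g : G →* G)) = Nat.card N :=
    Subgroup.card_map_of_injective (MulAut.conj g).injective
  exact Subgroup.eq_of_le_of_card_ge (hN.le_iff_card_dvd_card.2 card_conj.dvd) card_conj.ge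

theorem hasGcdProperty_iff_card_fixedPoints_quotient :
    HasGcdProperty N ↔ ∀ K : Subgroup G, Nat.card (fixedPoints K (G ⧸ N)) =
      if Nat.card K ∣ Nat.card N then N.index else 0 := by
  refine ⟨fun hN K => ?_, fun h => .of_forall_le_of_card_dvd_card fun K hdvd => ?_⟩
  · have := hN.normal
    split_ifs with hdvd
    · exact card_fixedPoints_quotient_of_le (hN.le_iff_card_dvd_card.2 hdvd)
    · exact card_fixedPoints_quotient_of_not_le (mt hN.le_iff_card_dvd_card.1 hdvd)
  · exact le_of_card_fixedPoints_quotient_eq_index ((h K).trans (if_pos hdvd))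

end GcdProperty

section Cyclic

variable {C : Type*} [Group C] [Finite C] [IsCyclic C]

theorem exists_subgroup_card_eq_of_isCyclic {d : ℕ} (hd : d ∣ Nat.card C) :
    ∃ H : Subgroup C, Nat.card H = d := by
  let := IsCyclic.commGroup (α := C)
  exact ⟨(powMonoidHom d : C →* C).ker,
    (IsCyclic.card_powMonoidHom_ker C d).trans (Nat.gcd_eq_right hd)⟩

theorem mem_subgroup_iff_pow_card_eq_one_of_isCyclic {H : Subgroup C} {x : C} :
    x ∈ H ↔ x ^ Nat.card H = 1 := by
  let := IsCyclic.commGroup (α := C)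
  have le_ker : H ≤ (powMonoidHom (Nat.card H) : C →* C).ker := fun _ hy =>
    orderOf_dvd_iff_pow_eq_one.1 (H.orderOf_dvd_natCard hy)
  have card_ker : Nat.card (powMonoidHom (Nat.card H) : C →* C).ker = Nat.card H :=
    (IsCyclic.card_powMonoidHom_ker C _).trans (Nat.gcd_eq_right H.card_subgroup_dvd_card)
  exact SetLike.ext_iff.1 (Subgroup.eq_of_le_of_card_ge le_ker card_ker.le) x

theorem hasGcdProperty_of_isCyclic (N : Subgroup C) : HasGcdProperty N :=
  .of_forall_le_of_card_dvd_card fun K hdvd _ hx =>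
    mem_subgroup_iff_pow_card_eq_one_of_isCyclic.2
      (orderOf_dvd_iff_pow_eq_one.1 ((K.orderOf_dvd_natCard hx).trans hdvd))

end Cyclic

theorem gcd_property_iff_fixed_points_eq_general {G : Type*} [Group G] [Finite G]
    (N : Subgroup G) {C : Type*} [Group C] (hC : IsCyclic C) (hcardC : Nat.card C = Nat.card G)
    (CN : Subgroup C) (hCN : Nat.card CN = Nat.card N) :
    HasGcdProperty N ↔
      ∀ (K : Subgroup G) (CK : Subgroup C), Nat.card CK = Nat.card K →
        Nat.card (fixedPoints CK (C ⧸ CN)) = Nat.card (fixedPoints K (G ⧸ N)) := by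
  have : Finite C := Nat.finite_of_card_ne_zero (hcardC ▸ Nat.card_pos.ne')
  have index_eq : CN.index = N.index := by
    refine Nat.eq_of_mul_eq_mul_left (Nat.card_pos (α := N)) ?_
    rw [N.card_mul_index, ← hCN, CN.card_mul_index, hcardC]
  have card_fixed_cyclic (CK : Subgroup C) : Nat.card (fixedPoints CK (C ⧸ CN)) =
      if Nat.card CK ∣ Nat.card N then N.index else 0 := by
    rw [← hCN, ← index_eq]
    exact hasGcdProperty_iff_card_fixedPoints_quotient.1 (hasGcdProperty_of_isCyclic CN) CK
  rw [hasGcdProperty_iff_card_fixedPoints_quotient]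
  refine ⟨fun h K CK hCK => ?_, fun h K => ?_⟩
  · rw [card_fixed_cyclic, h, hCK]
  · obtain ⟨CK, hCK⟩ := exists_subgroup_card_eq_of_isCyclic (C := C)
      (hcardC ▸ K.card_subgroup_dvd_card)
    rw [← h K CK hCK, card_fixed_cyclic, hCK]

theorem gcd_property_iff_fixed_points_eq {G : Type*} [Group G] [Finite G] (N : Subgroup G)
    [N.Normal] {C : Type*} [Group C] [Finite C] (hC : IsCyclic C)
    (hcardC : Nat.card C = Nat.card G)
    (CN : Subgroup C) (hCN : Nat.card CN = Nat.card N) :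
    (∀ H : Subgroup G, Nat.card (H ⊓ N : Subgroup G) = Nat.gcd (Nat.card H) (Nat.card N)) ↔
      ∀ (K : Subgroup G) (CK : Subgroup C), Nat.card CK = Nat.card K →
        Nat.card (MulAction.fixedPoints CK (C ⧸ CN)) =
          Nat.card (MulAction.fixedPoints K (G ⧸ N)) :=
  gcd_property_iff_fixed_points_eq_general N hC hcardC CN hCN
end

section
/- Let G be a finite group and N a normal cyclic subgroup of G such that G and N satisfy the gcd property, and let d be a divisor of |G|. Then G has a subgroup of order d if and only if the quotient group G/N has a subgroup of order d / gcd(d, |N|). -/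
/-!
Write `g = gcd(d, |N|)`. If `|H| = d`, then the image of `H` in `G ⧸ N` has order
`|H| / |H ⊓ N| = d / g` by the gcd property. Conversely, let `L` be the preimage in `G` of a
subgroup of `G ⧸ N` of order `d / g`, and let `M` be the subgroup of order `g` of `N`, which is
normal in `G` because it is characteristic in the cyclic group `N`. In `L ⧸ M` the normal subgroup
`N ⧸ M` has order `|N| / g`, coprime to its index `d / g`, so by Schur–Zassenhaus it has a
complement; the preimage of this complement in `L` has order `g * (d / g) = d`.
-/

section

open Subgroup

variable {G : Type*} [Group G]

theorem card_mul_relIndex_of_le {H K : Subgroup G} (h : H ≤ K) :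
    Nat.card H * H.relIndex K = Nat.card K := by
  simpa only [relIndex_bot_left] using relIndex_mul_relIndex ⊥ H K bot_le h

theorem relIndex_eq_card_map_mk' (N : Subgroup G) [N.Normal] (H : Subgroup G) :
    N.relIndex H = Nat.card (H.map (QuotientGroup.mk' N)) := by
  rw [← relIndex_ker, QuotientGroup.ker_mk']

theorem card_inf_mul_card_map_mk' (N : Subgroup G) [N.Normal] (H : Subgroup G) :
    Nat.card (H ⊓ N : Subgroup G) * Nat.card (H.map (QuotientGroup.mk' N)) = Nat.card H := by
  rw [← relIndex_eq_card_map_mk', ← inf_relIndex_left, card_mul_relIndex_of_le inf_le_left]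

theorem exists_characteristic_card_eq_of_isCyclic [Finite G] [IsCyclic G] {n : ℕ}
    (hn : n ∣ Nat.card G) : ∃ A : Subgroup G, A.Characteristic ∧ Nat.card A = n := by
  let _ : CommGroup G := IsCyclic.commGroup
  refine ⟨(powMonoidHom n : G →* G).ker, characteristic_iff_le_comap.2 fun φ x hx ↦ ?_, ?_⟩
  · have hx : x ^ n = 1 := hx
    change φ x ^ n = 1
    rw [← map_pow, hx, map_one]
  · rw [IsCyclic.card_powMonoidHom_ker, Nat.gcd_eq_right hn]

theorem exists_normal_le_card_eq_of_isCyclic (N : Subgroup G) [N.Normal] [Finite N] [IsCyclic N]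
    {n : ℕ} (hn : n ∣ Nat.card N) :
    ∃ M : Subgroup G, M.Normal ∧ M ≤ N ∧ Nat.card M = n := by
  obtain ⟨A, _, hA⟩ := exists_characteristic_card_eq_of_isCyclic hn
  exact ⟨A.map N.subtype, inferInstance, map_subtype_le A, by rw [card_subtype, hA]⟩

theorem exists_card_eq_card_mul_index_of_coprime {M N : Subgroup G} [M.Normal] [N.Normal]
    (hMN : M ≤ N) (hcop : (M.relIndex N).Coprime N.index) :
    ∃ H : Subgroup G, Nat.card H = Nat.card M * N.index := by
  let π := QuotientGroup.mk' M
  have hπ : Function.Surjective π := QuotientGroup.mk'_surjective M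
  have : (N.map π).Normal := Normal.map ‹_› π hπ
  have hcard : Nat.card (N.map π) = M.relIndex N := (relIndex_eq_card_map_mk' M N).symm
  have hindex : (N.map π).index = N.index := index_map_eq N hπ (by rwa [QuotientGroup.ker_mk'])
  obtain ⟨Q, hQ⟩ := exists_left_complement'_of_coprime (N := N.map π) (by rwa [hcard, hindex])
  refine ⟨Q.comap π, ?_⟩
  rw [← hindex, hQ.index_eq_card]
  exact QuotientGroup.card_preimage_mk M (Q : Set (G ⧸ M))

theorem exists_card_eq_card_mul_relIndex_of_coprime {L M N : Subgroup G} [M.Normal] [N.Normal]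
    (hMN : M ≤ N) (hNL : N ≤ L) (hcop : (M.relIndex N).Coprime (N.relIndex L)) :
    ∃ H : Subgroup G, Nat.card H = Nat.card M * N.relIndex L := by
  obtain ⟨H, hH⟩ := exists_card_eq_card_mul_index_of_coprime
    (M := M.subgroupOf L) (N := N.subgroupOf L) (comap_mono hMN)
    (by rwa [relIndex_subgroupOf hNL])
  refine ⟨H.map L.subtype, ?_⟩
  rw [card_subtype, hH, Nat.card_congr (subgroupOfEquivOfLe (hMN.trans hNL)).toEquiv, relIndex]

theorem exists_card_eq_of_card_quotient_eq_div_gcd (N : Subgroup G) [N.Normal] [Finite N]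
    [IsCyclic N] {d : ℕ} {K : Subgroup (G ⧸ N)} (hK : Nat.card K = d / d.gcd (Nat.card N)) :
    ∃ H : Subgroup G, Nat.card H = d := by
  have hg : 0 < d.gcd (Nat.card N) := Nat.gcd_pos_of_pos_right _ Nat.card_pos
  obtain ⟨M, _, hMN, hM⟩ := exists_normal_le_card_eq_of_isCyclic N (d.gcd_dvd_right (Nat.card N))
  let L := K.comap (QuotientGroup.mk' N)
  have hNL : N ≤ L := QuotientGroup.le_comap_mk' N K
  have hNL_index : N.relIndex L = d / d.gcd (Nat.card N) := by
    rw [relIndex_eq_card_map_mk',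
      map_comap_eq_self_of_surjective (QuotientGroup.mk'_surjective N), hK]
  have hMN_index : M.relIndex N = Nat.card N / d.gcd (Nat.card N) :=
    Nat.eq_div_of_mul_eq_right hg.ne' (by rw [← hM, card_mul_relIndex_of_le hMN])
  have hcop : (M.relIndex N).Coprime (N.relIndex L) := by
    rw [hMN_index, hNL_index]
    exact (Nat.coprime_div_gcd_div_gcd hg).symm
  obtain ⟨H, hH⟩ := exists_card_eq_card_mul_relIndex_of_coprime hMN hNL hcop
  exact ⟨H, by rw [hH, hM, hNL_index, Nat.mul_div_cancel' (Nat.gcd_dvd_left _ _)]⟩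

theorem exists_subgroup_iff_quotient_of_gcd_property_general (N : Subgroup G) [N.Normal] [Finite N]
    [IsCyclic N] (d : ℕ)
    (hgcd : ∀ H : Subgroup G, Nat.card H = d →
      Nat.card (H ⊓ N : Subgroup G) = d.gcd (Nat.card N)) :
    (∃ H : Subgroup G, Nat.card H = d) ↔
      ∃ K : Subgroup (G ⧸ N), Nat.card K = d / d.gcd (Nat.card N) := by
  refine ⟨fun ⟨H, hH⟩ ↦ ⟨H.map (QuotientGroup.mk' N), ?_⟩,
    fun ⟨_, hK⟩ ↦ exists_card_eq_of_card_quotient_eq_div_gcd N hK⟩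
  have hg : d.gcd (Nat.card N) ≠ 0 := Nat.gcd_ne_zero_right Nat.card_pos.ne'
  exact Nat.eq_div_of_mul_eq_right hg (by rw [← hgcd H hH, card_inf_mul_card_map_mk', hH])

end

theorem exists_subgroup_iff_quotient_of_gcd_property {G : Type*} [Group G] [Finite G]
    (N : Subgroup G) [N.Normal] (hcyc : IsCyclic N)
    (hgcd : ∀ H : Subgroup G, Nat.card (H ⊓ N : Subgroup G) = Nat.gcd (Nat.card H) (Nat.card N))
    (d : ℕ) (hd : d ∣ Nat.card G) :
    (∃ H : Subgroup G, Nat.card H = d) ↔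
      ∃ K : Subgroup (G ⧸ N), Nat.card K = d / Nat.gcd d (Nat.card N) :=
  exists_subgroup_iff_quotient_of_gcd_property_general N d fun H hH ↦ hH ▸ hgcd H
end

section
/- Let G be a finite group and N a normal subgroup of G such that for every cyclic subgroup L of G, the subgroup LN generated by L and N is cyclic. Then N is cyclic, N is contained in the center of G, and G and N satisfy the gcd property (for every subgroup H of G, |H ∩ N| = gcd(|H|, |N|)). -/
/-! Write `C = ⟨x⟩N` for an element `x`. As `C` is cyclic, it is abelian, so `x` centralizes `N`.
If `x ≠ 1` has finite order, then `C` is finite, hence has a single subgroup of each possible order,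
so `x` lies in `N` as soon as its order divides `|N|`. For a prime power `p ^ k` dividing both `|H|`
and `|N|`, a subgroup of order `p ^ k` of `H`, which exists by Sylow's theorem, therefore lies in
`N`. -/

section Cyclic

variable {C : Type*}

theorem finite_of_isCyclic_of_isOfFinOrder_of_ne_one [Group C] [IsCyclic C] {x : C}
    (hx : IsOfFinOrder x) (hx1 : x ≠ 1) : Finite C := by
  by_contra hC
  have : Infinite C := not_finite_iff_infinite.mp hC
  obtain ⟨c, hc⟩ := IsCyclic.exists_generator (α := C)
  have hc_inj : Function.Injective fun n : ℤ ↦ c ^ n :=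
    injective_zpow_iff_not_isOfFinOrder.mpr <|
      orderOf_eq_zero_iff.mp (Infinite.orderOf_eq_zero_of_forall_mem_zpowers hc)
  obtain ⟨a, rfl⟩ := hc x
  obtain ⟨n, hn, hpow⟩ := isOfFinOrder_iff_zpow_eq_one.mp hx
  have han : a * n = 0 := hc_inj <| by simpa only [zpow_mul, zpow_zero] using hpow
  exact hx1 <| by simp only [(mul_eq_zero.mp han).resolve_right hn, zpow_zero]

theorem ker_powMonoidHom_natCard_subgroup [CommGroup C] [Finite C] [IsCyclic C]
    (K : Subgroup C) : (powMonoidHom (Nat.card K) : C →* C).ker = K := by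
  have hle : K ≤ (powMonoidHom (Nat.card K) : C →* C).ker := fun _ hx ↦
    orderOf_dvd_iff_pow_eq_one.mp (K.orderOf_dvd_natCard hx)
  refine (Subgroup.eq_of_le_of_card_ge hle ?_).symm
  rw [IsCyclic.card_powMonoidHom_ker, Nat.gcd_eq_right K.card_subgroup_dvd_card]

theorem mem_of_isCyclic_of_orderOf_dvd_natCard [Group C] [IsCyclic C] {K : Subgroup C} {x : C}
    (hx : IsOfFinOrder x) (hdvd : orderOf x ∣ Nat.card K) : x ∈ K := by
  rcases eq_or_ne x 1 with rfl | hx1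
  · exact K.one_mem
  have := finite_of_isCyclic_of_isOfFinOrder_of_ne_one hx hx1
  let _ : CommGroup C := IsCyclic.commGroup
  rw [← ker_powMonoidHom_natCard_subgroup K]
  exact orderOf_dvd_iff_pow_eq_one.mp hdvd

end Cyclic

section Subgroup

variable {G : Type*} [Group G] {N : Subgroup G}

theorem mem_of_le_isCyclic_of_orderOf_dvd_natCard {C : Subgroup G} [IsCyclic C] (hNC : N ≤ C)
    {x : G} (hxC : x ∈ C) (hx : IsOfFinOrder x) (hdvd : orderOf x ∣ Nat.card N) : x ∈ N := by
  have hmem : (⟨x, hxC⟩ : C) ∈ N.subgroupOf C := by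
    refine mem_of_isCyclic_of_orderOf_dvd_natCard (Submonoid.isOfFinOrder_coe.mp hx) ?_
    rwa [Subgroup.orderOf_mk, Nat.card_congr (Subgroup.subgroupOfEquivOfLe hNC).toEquiv]
  exact Subgroup.mem_subgroupOf.mp hmem

theorem natCard_inf_eq_gcd_of_forall_mem_of_orderOf_dvd {H : Subgroup G} [Finite H]
    (hmem : ∀ x ∈ H, orderOf x ∣ Nat.card N → x ∈ N) :
    Nat.card (H ⊓ N : Subgroup G) = Nat.gcd (Nat.card H) (Nat.card N) := by
  apply Nat.dvd_antisymm
  · exact Nat.dvd_gcd (Subgroup.card_dvd_of_le inf_le_left) (Subgroup.card_dvd_of_le inf_le_right)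
  · refine (Nat.dvd_iff_prime_pow_dvd_dvd _ _).mpr fun p k hp hdvd ↦ ?_
    obtain ⟨hdvdH, hdvdN⟩ := Nat.dvd_gcd_iff.mp hdvd
    have := Fact.mk hp
    obtain ⟨P, hP⟩ := Sylow.exists_subgroup_card_pow_prime p hdvdH
    have hcard : Nat.card (P.map H.subtype) = p ^ k := by
      rw [Subgroup.card_map_of_injective H.subtype_injective, hP]
    have hPH : P.map H.subtype ≤ H := Subgroup.map_subtype_le P
    have hPN : P.map H.subtype ≤ N := fun x hx ↦
      hmem x (hPH hx) <| (Subgroup.orderOf_dvd_natCard _ hx).trans (hcard ▸ hdvdN)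
    exact hcard ▸ Subgroup.card_dvd_of_le (le_inf hPH hPN)

theorem le_center_of_forall_isMulCommutative_zpowers_sup
    (h : ∀ g : G, IsMulCommutative (Subgroup.zpowers g ⊔ N : Subgroup G)) :
    N ≤ Subgroup.center G := by
  refine fun n hn ↦ Subgroup.mem_center_iff.mpr fun g ↦ ?_
  have := h g
  exact setLike_mul_comm (s := Subgroup.zpowers g ⊔ N)
    (Subgroup.mem_sup_left (Subgroup.mem_zpowers g)) (Subgroup.mem_sup_right hn)

end Subgroup

-- For infinite `N` (so `Nat.card N = 0`) every finite `H` is trivial, and the equality is `1 = 1`.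
theorem cyclic_central_gcd_of_sup_cyclic_general {G : Type*} [Group G] (N : Subgroup G)
    (h : ∀ L : Subgroup G, IsCyclic L → IsCyclic (L ⊔ N : Subgroup G)) :
    IsCyclic N ∧ N ≤ Subgroup.center G ∧ ∀ H : Subgroup G, Finite H →
      Nat.card (H ⊓ N : Subgroup G) = Nat.gcd (Nat.card H) (Nat.card N) := by
  have hcyc (g : G) : IsCyclic (Subgroup.zpowers g ⊔ N : Subgroup G) := h _ inferInstance
  have hcomm (g : G) : IsMulCommutative (Subgroup.zpowers g ⊔ N : Subgroup G) :=
    have := hcyc g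
    inferInstance
  refine ⟨?_, le_center_of_forall_isMulCommutative_zpowers_sup hcomm, fun H _ ↦ ?_⟩
  · have := hcyc 1
    exact Subgroup.isCyclic_of_le (le_sup_right : N ≤ Subgroup.zpowers 1 ⊔ N)
  · refine natCard_inf_eq_gcd_of_forall_mem_of_orderOf_dvd fun x hxH hdvd ↦ ?_
    have := hcyc x
    have hx : IsOfFinOrder x :=
      Submonoid.isOfFinOrder_coe.mpr (isOfFinOrder_of_finite (⟨x, hxH⟩ : H))
    exact mem_of_le_isCyclic_of_orderOf_dvd_natCard le_sup_right
      (Subgroup.mem_sup_left (Subgroup.mem_zpowers x)) hx hdvd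

theorem cyclic_central_gcd_of_sup_cyclic {G : Type*} [Group G] [Finite G] (N : Subgroup G)
    [N.Normal] (h : ∀ L : Subgroup G, IsCyclic L → IsCyclic (L ⊔ N : Subgroup G)) :
    IsCyclic N ∧ N ≤ Subgroup.center G ∧
      ∀ H : Subgroup G, Nat.card (H ⊓ N : Subgroup G) = Nat.gcd (Nat.card H) (Nat.card N) := by
  obtain ⟨hcyc, hcenter, hgcd⟩ := cyclic_central_gcd_of_sup_cyclic_general N h
  exact ⟨hcyc, hcenter, fun H ↦ hgcd H inferInstance⟩
end

section
/- The center of SL(2, F_5) is contained in the Frattini subgroup of SL(2, F_5). -/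
/-!
If a maximal subgroup `M` misses part of the center `Z`, then `M Z = G`, so `M` is normal with
`G / M` a quotient of `Z`; hence `M` contains the commutator subgroup. Thus every maximal subgroup
contains `Z` or the commutator subgroup, which is all of `G` when `G` is perfect. As soon as some
`a ≠ 0` in `F` has `a ^ 2 ≠ 1`, the group `SL(2, F)` is perfect.
-/

section

variable {G : Type*} [Group G]

theorem commutator_le_of_sup_center_eq_top {H : Subgroup G} (hH : H ⊔ Subgroup.center G = ⊤) :
    commutator G ≤ H := by
  have : H.Normal := by
    rw [← Subgroup.normalizer_eq_top_iff, eq_top_iff, ← hH]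
    exact sup_le Subgroup.le_normalizer (Subgroup.center_le_normalizer _)
  exact Subgroup.Normal.commutator_le_of_self_sup_commutative_eq_top hH inferInstance

variable (G)

theorem center_inf_commutator_le_frattini :
    Subgroup.center G ⊓ commutator G ≤ frattini G := by
  refine le_iInf₂ fun M hM ↦ ?_
  by_cases hZ : Subgroup.center G ≤ M
  · exact inf_le_left.trans hZ
  · have hsup : M ⊔ Subgroup.center G = ⊤ := hM.2 _ (left_lt_sup.mpr hZ)
    exact inf_le_right.trans (commutator_le_of_sup_center_eq_top hsup)

theorem center_le_frattini_of_isPerfect [Group.IsPerfect G] :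
    Subgroup.center G ≤ frattini G := by
  simpa only [Group.IsPerfect.commutator_eq_top, inf_top_eq] using
    center_inf_commutator_le_frattini G

end

theorem SL2_F5_center_le_frattini_general {F : Type*} [Field F] (hF : ∃ a : F, a ≠ 0 ∧ a ^ 2 ≠ 1) :
    Subgroup.center (Matrix.SpecialLinearGroup (Fin 2) F) ≤
      frattini (Matrix.SpecialLinearGroup (Fin 2) F) := by
  obtain ⟨a, ha, hasq⟩ := hF
  have : Group.IsPerfect (Matrix.SpecialLinearGroup (Fin 2) F) :=
    ⟨Matrix.SL2.commutator_eq_top ha hasq⟩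
  exact center_le_frattini_of_isPerfect _

theorem SL2_F5_center_le_frattini :
    Subgroup.center (Matrix.SpecialLinearGroup (Fin 2) (ZMod 5)) ≤
      frattini (Matrix.SpecialLinearGroup (Fin 2) (ZMod 5)) := by
  have htwo : (2 : ZMod 5) ≠ 0 ∧ (2 : ZMod 5) ^ 2 ≠ 1 := by decide
  have : Fact (Nat.Prime 5) := ⟨Nat.prime_five⟩
  exact SL2_F5_center_le_frattini_general ⟨2, htwo⟩
end
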